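/- Let ρ = |ψ⟩⟨ψ| be an n-qubit pure state and S ⊆ Fin n a nonempty subset with |S| = s. With U = ⊗_{i∈S} U_i a product of independent Haar-random elements of U(2) and P_U(z) = tr(U ρ U† |z⟩⟨z|) the Born probability of outcome z : S → Fin 2, the concentratable entanglement satisfies C_ψ(S) = 1 − (3/2)^s · Σ_{z ∈ {0,1}^S} E_U[P_U(z)²], where the sum is over all 2^s bitstrings z and E_U denotes integration over the product Haar measure. -/

import Mathlib

open Matrix MeasureTheory
open scoped BigOperators ComplexConjugate Kronecker

/-- `n`-qubit operators: matrices indexed by functions `Fin n → Fin 2`. -/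
abbrev QMat (n : ℕ) : Type := Matrix (Fin n → Fin 2) (Fin n → Fin 2) ℂ

/-- Combine an assignment on `α` and one on its complement into a full index. -/
noncomputable def embedIdx {n : ℕ} (α : Finset (Fin n)) (i : {x : Fin n // x ∈ α} → Fin 2)
    (k : {x : Fin n // x ∉ α} → Fin 2) : Fin n → Fin 2 :=
  fun x => if h : x ∈ α then i ⟨x, h⟩ else k ⟨x, h⟩

/-- The reduced density matrix on the qubits in `α` (partial trace over the rest). -/
noncomputable def reduced {n : ℕ} (ρ : QMat n) (α : Finset (Fin n)) :
    Matrix ({x : Fin n // x ∈ α} → Fin 2) ({x : Fin n // x ∈ α} → Fin 2) ℂ :=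
  fun i j => ∑ k : ({x : Fin n // x ∉ α} → Fin 2), ρ (embedIdx α i k) (embedIdx α j k)

/-- The concentratable entanglement `C_ψ(S) = 1 - 2^{-|S|} ∑_{α ⊆ S} tr(ρ_α²)`. -/
noncomputable def CE {n : ℕ} (ρ : QMat n) (S : Finset (Fin n)) : ℝ :=
  1 - (1 / 2 : ℝ) ^ S.card *
    ∑ α ∈ S.powerset, (Matrix.trace (reduced ρ α * reduced ρ α)).re

/-- Tensor product of single-qubit operators on the qubits in `S`, identity elsewhere. -/
noncomputable def localOp {n : ℕ} (S : Finset (Fin n))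
    (V : {i : Fin n // i ∈ S} → Matrix (Fin 2) (Fin 2) ℂ) : QMat n :=
  fun x y => ∏ i : Fin n,
    if h : i ∈ S then V ⟨i, h⟩ (x i) (y i)
    else (if x i = y i then 1 else 0)

/-- Projector onto computational basis state `z` on the qubits in `S`, identity elsewhere. -/
noncomputable def projZ {n : ℕ} (S : Finset (Fin n)) (z : {i : Fin n // i ∈ S} → Fin 2) : QMat n :=
  fun x y => ∏ i : Fin n,
    if h : i ∈ S then (if x i = z ⟨i, h⟩ ∧ y i = z ⟨i, h⟩ then 1 else 0)
    else (if x i = y i then 1 else 0)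

noncomputable instance : MeasurableSpace (Matrix.unitaryGroup (Fin 2) ℂ) := borel _
instance : BorelSpace (Matrix.unitaryGroup (Fin 2) ℂ) := ⟨rfl⟩

/-- The Born probability `P_U(z) = tr(U ρ U† |z⟩⟨z|)` of outcome `z` after the local
randomized measurement given by the single-qubit unitaries `V i`, `i ∈ S`. -/
noncomputable def born {n : ℕ} (ρ : QMat n) (S : Finset (Fin n))
    (V : {i : Fin n // i ∈ S} → Matrix.unitaryGroup (Fin 2) ℂ)
    (z : {i : Fin n // i ∈ S} → Fin 2) : ℝ :=
  (Matrix.trace (localOp S (fun i => (V i : Matrix (Fin 2) (Fin 2) ℂ)) * ρ *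
      (localOp S (fun i => (V i : Matrix (Fin 2) (Fin 2) ℂ)))ᴴ * projZ S z)).re

/-!
Let `F_α` be the operator on `ρ ⊗ ρ` exchanging the two copies of each qubit in `α`. The swap trick
turns both sides of the identity into traces against `ρ ⊗ ρ`: on one side
`tr(ρ_α²) = tr((ρ ⊗ ρ) F_α)`, on the other
`P_U(z)² = tr((ρ ⊗ ρ) ⨂_{i ∈ S} (U_i† |z_i⟩⟨z_i| U_i)^{⊗ 2})`. By independence, averaging the latter
over `U` averages each factor separately. Invariance of Haar measure makes the averaged factor
commute with every `W ⊗ W`, and the average is unchanged by multiplying with the swap `F` on either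
side. Diagonal `W` then kill every entry of the average that vanishes in `1 + F`, and a single `W`
without zero entries fixes the ratios of the others, so the average is a multiple of `1 + F`; its
trace is `1`, so it equals `(1 + F) / 6`. Expanding `⨂_{i ∈ S} (1 + F_i) / 6` gives
`6⁻ˢ ∑_{α ⊆ S} F_α` for each of the `2ˢ` bitstrings.
-/

section PiKronecker

variable {ι l m n κ R : Type*} [Fintype ι] [CommSemiring R]

/-- The tensor product `⨂ᵢ Aᵢ` of a finite family of matrices, as a multilinear map in the family.
Its rows and columns are indexed by functions, in contrast to the pairs used by `⊗ₖ`. -/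
def piKronecker : MultilinearMap R (fun _ : ι => Matrix l m R) (Matrix (ι → l) (ι → m) R) :=
  MultilinearMap.pi fun x => MultilinearMap.pi fun y =>
    (MultilinearMap.mkPiAlgebra R ι R).compLinearMap fun i => entryLinearMap R R (x i) (y i)

theorem piKronecker_apply (A : ι → Matrix l m R) (x : ι → l) (y : ι → m) :
    piKronecker A x y = ∏ i, A i (x i) (y i) := by
  change (MultilinearMap.mkPiAlgebra R ι R).compLinearMap _ A = _
  simp

theorem piKronecker_mul [DecidableEq ι] [Fintype m] (A : ι → Matrix l m R)
    (B : ι → Matrix m n R) :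
    piKronecker A * piKronecker B = piKronecker fun i => A i * B i := by
  ext x y
  simp only [mul_apply, piKronecker_apply, ← Finset.prod_mul_distrib]
  exact (Fintype.prod_sum fun i k => A i (x i) k * B i k (y i)).symm

theorem conjTranspose_piKronecker [StarRing R] (A : ι → Matrix l m R) :
    (piKronecker A)ᴴ = piKronecker fun i => (A i)ᴴ := by
  ext x y
  simp [piKronecker_apply]

theorem piKronecker_one_submatrix [DecidableEq κ] (σ : ι → κ → κ) :
    piKronecker (fun i => (1 : Matrix κ κ R).submatrix id (σ i)) =
      (1 : Matrix (ι → κ) (ι → κ) R).submatrix id fun x i => σ i (x i) := by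
  ext x y
  simp [piKronecker_apply, one_apply, Finset.prod_ite_zero, funext_iff]

/-- The tensor square `M ⊗ M` of a matrix on `ι`-indexed sites, with the two copies of each site
grouped together so that it can be multiplied with a `piKronecker` of two-copy operators. -/
def tensorSquare (M : Matrix (ι → l) (ι → m) R) : Matrix (ι → l × l) (ι → m × m) R :=
  (M ⊗ₖ M).submatrix (Equiv.arrowProdEquivProdArrow ι _ _) (Equiv.arrowProdEquivProdArrow ι _ _)

theorem tensorSquare_piKronecker (A : ι → Matrix l m R) :
    tensorSquare (piKronecker A) = piKronecker fun i => A i ⊗ₖ A i := by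
  ext x y
  simp [tensorSquare, piKronecker_apply, Finset.prod_mul_distrib]

theorem trace_tensorSquare_mul [DecidableEq ι] [Fintype l] [Fintype m]
    (M : Matrix (ι → l) (ι → m) R) (N : Matrix (ι → m) (ι → l) R) :
    trace (tensorSquare M * tensorSquare N) = trace (M * N) ^ 2 := by
  rw [tensorSquare, tensorSquare, submatrix_mul_equiv, ← mul_kronecker_mul, sq, ← trace_kronecker]
  exact (Equiv.arrowProdEquivProdArrow ι (fun _ => l) fun _ => l).sum_comp fun p =>
    ((M * N) ⊗ₖ (M * N)) p p

theorem trace_mul_one_submatrix [Fintype κ] [DecidableEq κ] (M : Matrix κ κ R) (f : κ → κ) :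
    trace (M * (1 : Matrix κ κ R).submatrix id f) = ∑ x, M x (f x) := by
  simp [trace, mul_apply, one_apply]

end PiKronecker

section SwapMatrix

variable (κ R : Type*) [DecidableEq κ] [CommSemiring R]

/-- The operator exchanging the two factors of a tensor square. -/
def swapMatrix : Matrix (κ × κ) (κ × κ) R := (1 : Matrix _ _ R).submatrix id Prod.swap

theorem swapMatrix_apply (p q : κ × κ) : swapMatrix κ R p q = if p = q.swap then 1 else 0 := by
  simp [swapMatrix, one_apply]

theorem trace_swapMatrix [Fintype κ] : trace (swapMatrix κ R) = Fintype.card κ := by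
  simp [trace, swapMatrix_apply, Fintype.sum_prod_type, Prod.ext_iff, ite_and]

variable {κ R} in
theorem trace_tensorSquare_mul_swapMatrix {ι : Type*} [Fintype ι] [DecidableEq ι] [Fintype κ]
    (M : Matrix (ι → κ) (ι → κ) R) (α : Finset ι) :
    trace (tensorSquare M * piKronecker (α.piecewise (fun _ => swapMatrix κ R) 1)) =
      ∑ a, ∑ b, M a (α.piecewise b a) * M b (α.piecewise a b) := by
  have hperm : (α.piecewise (fun _ => swapMatrix κ R) 1) =
      fun i => (1 : Matrix _ _ R).submatrix id (if i ∈ α then Prod.swap else id) := by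
    ext i : 1
    by_cases hi : i ∈ α <;> simp [hi, swapMatrix]
  rw [hperm, piKronecker_one_submatrix, trace_mul_one_submatrix, ← Fintype.sum_prod_type',
    ← (Equiv.arrowProdEquivProdArrow ι (fun _ => κ) (fun _ => κ)).sum_comp]
  refine Finset.sum_congr rfl fun x _ => ?_
  simp only [tensorSquare, submatrix_apply, kroneckerMap_apply]
  congr! 3 <;> ext i <;> by_cases hi : i ∈ α <;> simp [hi]

end SwapMatrix

section HaarSecondMoment

instance {m 𝕜 : Type*} [Fintype m] [DecidableEq m] [RCLike 𝕜] :
    CompactSpace (unitaryGroup m 𝕜) := by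
  have hbox : IsCompact
      (Set.univ.pi fun _ : m => Set.univ.pi fun _ : m => Metric.closedBall (0 : 𝕜) 1) :=
    isCompact_univ_pi fun _ => isCompact_univ_pi fun _ => isCompact_closedBall _ _
  exact isCompact_iff_compactSpace.mp <|
    hbox.of_isClosed_subset (isClosed_unitary (R := Matrix m m 𝕜)) fun U hU i _ j _ => by
      simpa using entry_norm_bound_of_unitary hU i j

theorem isMulRightInvariant_of_isHaarMeasure {G : Type*} [Group G] [TopologicalSpace G]
    [IsTopologicalGroup G] [LocallyCompactSpace G] [MeasurableSpace G] [BorelSpace G]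
    (μ : Measure G) [μ.IsHaarMeasure] [IsProbabilityMeasure μ] : μ.IsMulRightInvariant where
  map_mul_right_eq_self g := by
    have : IsProbabilityMeasure (μ.map (· * g)) :=
      Measure.isProbabilityMeasure_map (measurable_mul_const g).aemeasurable
    exact Measure.isHaarMeasure_eq_of_isProbabilityMeasure _ _

theorem exists_phases_mul_ne_mul {κ : Type*} {p q : κ × κ} (h : p ≠ q) (h' : p ≠ q.swap) :
    ∃ w : κ → ℂ, (∀ k, star (w k) * w k = 1) ∧ w p.1 * w p.2 ≠ w q.1 * w q.2 := by
  classical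
  suffices ∃ e, Function.update (1 : κ → ℂ) e Complex.I p.1 *
      Function.update (1 : κ → ℂ) e Complex.I p.2 ≠
      Function.update (1 : κ → ℂ) e Complex.I q.1 *
        Function.update (1 : κ → ℂ) e Complex.I q.2 by
    obtain ⟨e, he⟩ := this
    refine ⟨_, fun k => ?_, he⟩
    by_cases hk : k = e <;> simp [hk]
  obtain ⟨a, c⟩ := p
  obtain ⟨b, d⟩ := q
  have I_ne_one : Complex.I ≠ 1 := by simp [Complex.ext_iff]
  have neg_one_ne_I : (-1 : ℂ) ≠ Complex.I := by simp [Complex.ext_iff]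
  have neg_one_ne_one : (-1 : ℂ) ≠ 1 := by norm_num
  rw [Ne, Prod.mk_inj, not_and] at h
  rw [Ne, Prod.swap, Prod.mk_inj, not_and] at h'
  by_cases hab : a = b
  · refine ⟨c, ?_⟩
    have hcd := h hab
    subst hab
    by_cases hca : c = a <;> simp_all [Function.update_apply, eq_comm]
  · by_cases had : a = d
    · refine ⟨c, ?_⟩
      have hcb := h' had
      subst had
      by_cases hca : c = a <;> simp_all [Function.update_apply, eq_comm]
    · refine ⟨a, ?_⟩
      by_cases hca : c = a <;> simp_all [Function.update_apply, eq_comm]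

variable {κ : Type*} [Fintype κ] [DecidableEq κ]

theorem exists_mem_unitaryGroup_forall_apply_ne_zero :
    ∃ W ∈ unitaryGroup κ ℂ, ∀ a b, W a b ≠ 0 := by
  rcases isEmpty_or_nonempty κ with _ | _
  · exact ⟨1, one_mem _, isEmptyElim⟩
  have hd : (Fintype.card κ : ℂ) ≠ 0 := by simp
  -- `1 + c J`, with `J` the all-ones matrix of order `d`, is unitary iff `c + c̄ + d |c|² = 0`.
  obtain ⟨c, hc⟩ : ∃ c : ℂ, c = (Complex.I - 1) / Fintype.card κ := ⟨_, rfl⟩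
  have hc_norm : c + conj c + Fintype.card κ * (c * conj c) = 0 := by
    simp only [hc, map_div₀, map_sub, Complex.conj_I, map_one, map_natCast]
    field_simp
    linear_combination -Complex.I_sq
  have hc_im : c.im ≠ 0 := by simp [hc]
  refine ⟨1 + of fun _ _ => c, ?_, fun a b hab => hc_im ?_⟩
  · rw [mem_unitaryGroup_iff]
    ext a b
    simp only [star_add, star_one, mul_apply, Matrix.add_apply, one_apply, of_apply, star_apply,
      RCLike.star_def, mul_add, mul_ite, mul_one, mul_zero, add_mul, ite_mul, one_mul, zero_mul,
      Finset.sum_add_distrib, Finset.sum_ite_eq', Finset.mem_univ, ↓reduceIte, Finset.sum_ite_eq,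
      Finset.sum_const, Finset.card_univ, nsmul_eq_mul]
    linear_combination hc_norm
  · simpa [one_apply, apply_ite Complex.im] using congrArg Complex.im hab

theorem apply_eq_zero_of_commute_kronecker {T : Matrix (κ × κ) (κ × κ) ℂ}
    (hT : ∀ W ∈ unitaryGroup κ ℂ, Commute T (W ⊗ₖ W)) {p q : κ × κ}
    (h : p ≠ q) (h' : p ≠ q.swap) : T p q = 0 := by
  obtain ⟨w, hw, hne⟩ := exists_phases_mul_ne_mul h h'
  have hW : diagonal w ∈ unitaryGroup κ ℂ := by
    rw [mem_unitaryGroup_iff', star_eq_conjTranspose, diagonal_conjTranspose,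
      diagonal_mul_diagonal, ← diagonal_one]
    exact congrArg _ (funext hw)
  have hentry := congrFun₂ (hT _ hW).eq p q
  rw [diagonal_kronecker_diagonal, mul_diagonal, diagonal_mul, mul_comm] at hentry
  exact (mul_eq_mul_right_iff.mp hentry.symm).resolve_left hne

theorem apply_diag_eq_two_mul_of_commute_kronecker {T : Matrix (κ × κ) (κ × κ) ℂ}
    (hT : ∀ W ∈ unitaryGroup κ ℂ, Commute T (W ⊗ₖ W)) (hleft : ∀ p q, T p.swap q = T p q)
    {a b : κ} (hab : a ≠ b) : T (a, a) (a, a) = 2 * T (a, b) (a, b) := by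
  obtain ⟨W, hW, hne⟩ := exists_mem_unitaryGroup_forall_apply_ne_zero (κ := κ)
  have hentry := congrFun₂ (hT W hW).eq (a, a) (a, b)
  rw [mul_apply, mul_apply, Fintype.sum_eq_single (a, a) fun q hq => by
      rw [apply_eq_zero_of_commute_kronecker hT hq.symm (by grind), zero_mul],
    Fintype.sum_eq_add (a, b) (b, a) (by grind) fun q hq => by
      rw [apply_eq_zero_of_commute_kronecker hT hq.1 (by grind), mul_zero],
    ← hleft (b, a)] at hentry
  simp only [kroneckerMap_apply, Prod.swap_prod_mk] at hentry
  refine mul_right_cancel₀ (mul_ne_zero (hne a a) (hne a b)) ?_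
  linear_combination hentry

theorem exists_eq_smul_one_add_swapMatrix {T : Matrix (κ × κ) (κ × κ) ℂ}
    (hT : ∀ W ∈ unitaryGroup κ ℂ, Commute T (W ⊗ₖ W))
    (hleft : ∀ p q, T p.swap q = T p q) (hright : ∀ p q, T p q.swap = T p q) :
    ∃ c : ℂ, T = c • (1 + swapMatrix κ ℂ) := by
  have h_diag {a b : κ} (hab : a ≠ b) : T (a, a) (a, a) = 2 * T (a, b) (a, b) :=
    apply_diag_eq_two_mul_of_commute_kronecker hT hleft hab
  have h_const (a b : κ) : T (a, a) (a, a) = T (b, b) (b, b) := by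
    rcases eq_or_ne a b with rfl | hab
    · rfl
    · rw [h_diag hab, h_diag hab.symm, ← hleft (b, a), ← hright]
      rfl
  rcases isEmpty_or_nonempty κ with _ | ⟨⟨o⟩⟩
  · exact ⟨0, Subsingleton.elim _ _⟩
  refine ⟨T (o, o) (o, o) / 2, ?_⟩
  have h_self (q : κ × κ) :
      T q q = T (o, o) (o, o) / 2 * (1 + if q = q.swap then 1 else 0) := by
    obtain ⟨a, b⟩ := q
    rw [h_const o a]
    rcases eq_or_ne a b with rfl | hab
    · simp [one_add_one_eq_two]
    · simp [hab, h_diag hab]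
  ext p q
  rw [Matrix.smul_apply, Matrix.add_apply, swapMatrix_apply, one_apply, smul_eq_mul]
  by_cases h : p = q
  · rw [h, h_self, if_pos rfl]
  · by_cases h' : p = q.swap
    · rw [h', hleft, h_self, add_comm]
      grind
    · rw [apply_eq_zero_of_commute_kronecker hT h h', if_neg h, if_neg h', add_zero, mul_zero]

/-- The projector `U† |z⟩⟨z| U`, i.e. `|z⟩⟨z|` evolved in the Heisenberg picture. -/
def heisenbergProj (z : κ) (U : Matrix κ κ ℂ) : Matrix κ κ ℂ := Uᴴ * single z z 1 * U

theorem heisenbergProj_apply (z : κ) (U : Matrix κ κ ℂ) (a b : κ) :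
    heisenbergProj z U a b = conj (U z a) * U z b := by
  simp [heisenbergProj, mul_apply, single_apply, ite_and]

theorem heisenbergProj_mul (z : κ) (U W : Matrix κ κ ℂ) :
    heisenbergProj z (U * W) = Wᴴ * heisenbergProj z U * W := by
  simp only [heisenbergProj, conjTranspose_mul, Matrix.mul_assoc]

theorem trace_heisenbergProj (z : κ) {U : Matrix κ κ ℂ} (hU : U ∈ unitaryGroup κ ℂ) :
    trace (heisenbergProj z U) = 1 := by
  rw [heisenbergProj, Matrix.mul_assoc, trace_mul_comm, Matrix.mul_assoc,
    ← star_eq_conjTranspose, mem_unitaryGroup_iff.mp hU, Matrix.mul_one, trace_single_eq_same]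

open scoped Matrix.Norms.L2Operator

theorem integral_linearMap_comp {Ω E F : Type*} [MeasurableSpace Ω] {μ : Measure Ω}
    [NormedAddCommGroup E] [NormedSpace ℂ E] [FiniteDimensional ℂ E] [NormedAddCommGroup F]
    [NormedSpace ℂ F] [CompleteSpace F] (L : E →ₗ[ℂ] F) {X : Ω → E} (hX : Integrable X μ) :
    ∫ ω, L (X ω) ∂μ = L (∫ ω, X ω ∂μ) := by
  have := FiniteDimensional.complete ℂ E
  exact L.toContinuousLinearMap.integral_comp_comm hX

theorem integral_matrix_apply {Ω m n : Type*} [MeasurableSpace Ω] [Fintype m] [Fintype n]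
    [DecidableEq n] {μ : Measure Ω} {X : Ω → Matrix m n ℂ} (hX : Integrable X μ) (i : m) (j : n) :
    (∫ ω, X ω ∂μ) i j = ∫ ω, X ω i j ∂μ :=
  (integral_linearMap_comp (entryLinearMap ℂ ℂ i j) hX).symm

theorem integrable_matrix_iff {Ω m n : Type*} [MeasurableSpace Ω] [Fintype m] [Fintype n]
    [DecidableEq n] {μ : Measure Ω} {X : Ω → Matrix m n ℂ} :
    Integrable X μ ↔ ∀ i j, Integrable (fun ω => X ω i j) μ := by
  classical
  refine ⟨fun hX i j => (entryLinearMap ℂ ℂ i j).toContinuousLinearMap.integrable_comp hX,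
    fun hX => ?_⟩
  have hsum : X = fun ω => ∑ i, ∑ j, X ω i j • single i j (1 : ℂ) := by
    ext1 ω
    simpa only [smul_single, smul_eq_mul, mul_one] using matrix_eq_sum_single (X ω)
  rw [hsum]
  exact integrable_finsetSum _ fun i _ => integrable_finsetSum _ fun j _ =>
    (hX i j).smul_const _

variable [MeasurableSpace (unitaryGroup κ ℂ)] [BorelSpace (unitaryGroup κ ℂ)]
  (μ : Measure (unitaryGroup κ ℂ))

theorem integrable_heisenbergProj_kronecker [IsFiniteMeasureOnCompacts μ] (z : κ) :
    Integrable (fun U : unitaryGroup κ ℂ => heisenbergProj z U.1 ⊗ₖ heisenbergProj z U.1) μ := by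
  have hcont : Continuous fun U : unitaryGroup κ ℂ => heisenbergProj z U.1 :=
    (continuous_subtype_val.matrix_conjTranspose.matrix_mul continuous_const).matrix_mul
      continuous_subtype_val
  exact Continuous.integrable_of_hasCompactSupport
    (continuous_matrix fun p q => (hcont.matrix_elem p.1 q.1).mul (hcont.matrix_elem p.2 q.2))
    (HasCompactSupport.of_compactSpace _)

theorem commute_integral_heisenbergProj_kronecker [IsFiniteMeasureOnCompacts μ]
    [μ.IsMulRightInvariant] (z : κ) {W : Matrix κ κ ℂ} (hW : W ∈ unitaryGroup κ ℂ) :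
    Commute (∫ U : unitaryGroup κ ℂ, heisenbergProj z U.1 ⊗ₖ heisenbergProj z U.1 ∂μ)
      (W ⊗ₖ W) := by
  set T := ∫ U : unitaryGroup κ ℂ, heisenbergProj z U.1 ⊗ₖ heisenbergProj z U.1 ∂μ
  have h_conj : T = (W ⊗ₖ W)ᴴ * T * (W ⊗ₖ W) := by
    let L := LinearMap.mulLeftRight ℂ ((W ⊗ₖ W)ᴴ, W ⊗ₖ W)
    calc T = ∫ U : unitaryGroup κ ℂ,
            heisenbergProj z (U.1 * W) ⊗ₖ heisenbergProj z (U.1 * W) ∂μ :=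
          (integral_mul_right_eq_self (fun U : unitaryGroup κ ℂ =>
            heisenbergProj z U.1 ⊗ₖ heisenbergProj z U.1) ⟨W, hW⟩).symm
      _ = ∫ U : unitaryGroup κ ℂ,
            L (heisenbergProj z U.1 ⊗ₖ heisenbergProj z U.1) ∂μ := by
          simp only [heisenbergProj_mul, mul_kronecker_mul, conjTranspose_kronecker,
            LinearMap.mulLeftRight_apply, L]
      _ = L T := integral_linearMap_comp L (integrable_heisenbergProj_kronecker μ z)
  have hWW : (W ⊗ₖ W) * (W ⊗ₖ W)ᴴ = 1 := by
    rw [conjTranspose_kronecker, ← mul_kronecker_mul, ← star_eq_conjTranspose,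
      mem_unitaryGroup_iff.mp hW, one_kronecker_one]
  calc T * (W ⊗ₖ W) = (W ⊗ₖ W) * (W ⊗ₖ W)ᴴ * T * (W ⊗ₖ W) := by rw [hWW, Matrix.one_mul]
    _ = (W ⊗ₖ W) * T := by
      rw [Matrix.mul_assoc, Matrix.mul_assoc, ← Matrix.mul_assoc _ T, ← h_conj]

theorem integral_heisenbergProj_kronecker [IsProbabilityMeasure μ] [μ.IsMulRightInvariant]
    (z : κ) :
    ∫ U : unitaryGroup κ ℂ, heisenbergProj z U.1 ⊗ₖ heisenbergProj z U.1 ∂μ =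
      (Fintype.card κ * (Fintype.card κ + 1) : ℂ)⁻¹ • (1 + swapMatrix κ ℂ) := by
  have hint := integrable_heisenbergProj_kronecker μ z
  obtain ⟨c, hc⟩ := exists_eq_smul_one_add_swapMatrix
    (fun W hW => commute_integral_heisenbergProj_kronecker μ z hW)
    (fun p q => by
      simp only [integral_matrix_apply hint, kroneckerMap_apply, heisenbergProj_apply,
        Prod.fst_swap, Prod.snd_swap]
      congr! 2
      ring)
    (fun p q => by
      simp only [integral_matrix_apply hint, kroneckerMap_apply, heisenbergProj_apply,
        Prod.fst_swap, Prod.snd_swap]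
      congr! 2
      ring)
  have h_trace : c * (Fintype.card κ * (Fintype.card κ + 1)) = 1 := by
    calc c * (Fintype.card κ * (Fintype.card κ + 1)) = trace (c • (1 + swapMatrix κ ℂ)) := by
          simp only [smul_add, trace_add, trace_smul, trace_one, Fintype.card_prod, Nat.cast_mul,
            smul_eq_mul, trace_swapMatrix]
          ring
      _ = ∫ U : unitaryGroup κ ℂ, trace (heisenbergProj z U.1 ⊗ₖ heisenbergProj z U.1) ∂μ := by
          rw [← hc]
          exact (integral_linearMap_comp (traceLinearMap _ ℂ ℂ) hint).symm
      _ = 1 := by simp [trace_kronecker, trace_heisenbergProj]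
  rw [hc, eq_inv_of_mul_eq_one_left h_trace]

end HaarSecondMoment

section ExtendOne

variable {ι M N : Type*} [DecidableEq ι] (S : Finset ι)

/-- The family on `ι` that agrees with `f` on `S` and is `1` off `S`; with matrix values, the
single-site factors of an operator acting only on the sites in `S`. -/
def extendOne [One M] (f : {i // i ∈ S} → M) (i : ι) : M :=
  if h : i ∈ S then f ⟨i, h⟩ else 1

theorem apply_extendOne [One M] [One N] (g : M → N) (hg : g 1 = 1) (f : {i // i ∈ S} → M)
    (i : ι) : g (extendOne S f i) = extendOne S (fun i => g (f i)) i := by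
  unfold extendOne
  split_ifs <;> simp [hg]

theorem extendOne_mul [MulOneClass M] (f g : {i // i ∈ S} → M) (i : ι) :
    extendOne S f i * extendOne S g i = extendOne S (fun i => f i * g i) i := by
  unfold extendOne
  split_ifs <;> simp

theorem extendOne_const [One M] (c : M) :
    extendOne S (fun _ => c) = S.piecewise (fun _ => c) 1 := by
  ext i
  by_cases hi : i ∈ S <;> simp [extendOne, hi]

theorem piKronecker_extendOne_apply {κ R : Type*} [Fintype ι] [DecidableEq κ] [CommSemiring R]
    (A : {i // i ∈ S} → Matrix κ κ R) (x y : ι → κ) :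
    piKronecker (extendOne S A) x y =
      (∏ i, A i (x i) (y i)) * ∏ i : {i // i ∉ S}, (1 : Matrix κ κ R) (x i) (y i) := by
  have hfactor (i : ι) : extendOne S A i (x i) (y i) =
      if h : i ∈ S then A ⟨i, h⟩ (x i) (y i) else (1 : Matrix κ κ R) (x i) (y i) := by
    unfold extendOne
    split_ifs <;> rfl
  simp only [piKronecker_apply, hfactor]
  convert Fintype.prod_dite _ _

end ExtendOne

section Independence

open scoped Matrix.Norms.L2Operator

variable {ι κ : Type*} [Fintype ι] [DecidableEq ι] [Fintype κ] [DecidableEq κ] {S : Finset ι}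
  {Ω : {i // i ∈ S} → Type*} [∀ i, MeasurableSpace (Ω i)] {μ : ∀ i, Measure (Ω i)}
  [∀ i, SigmaFinite (μ i)] {A : ∀ i, Ω i → Matrix κ κ ℂ}

theorem integrable_piKronecker_extendOne (hA : ∀ i, Integrable (A i) (μ i)) :
    Integrable (fun V => piKronecker (extendOne S fun i => A i (V i))) (Measure.pi μ) := by
  refine integrable_matrix_iff.mpr fun x y => ?_
  simp only [piKronecker_extendOne_apply]
  exact (Integrable.fintype_prod_dep (f := fun i ω => A i ω (x i) (y i)) fun i =>
    integrable_matrix_iff.mp (hA i) _ _).mul_const _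

theorem integral_piKronecker_extendOne (hA : ∀ i, Integrable (A i) (μ i)) :
    ∫ V, piKronecker (extendOne S fun i => A i (V i)) ∂Measure.pi μ =
      piKronecker (extendOne S fun i => ∫ ω, A i ω ∂μ i) := by
  ext x y
  rw [integral_matrix_apply (integrable_piKronecker_extendOne hA)]
  simp only [piKronecker_extendOne_apply, integral_mul_const, integral_matrix_apply (hA _)]
  rw [integral_fintype_prod_eq_prod fun i ω => A i ω (x i) (y i)]

end Independence

theorem isSelfAdjoint_trace_mul {m R : Type*} [Fintype m] [CommSemiring R] [StarRing R]
    {A B : Matrix m m R} (hA : A.IsHermitian) (hB : B.IsHermitian) :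
    IsSelfAdjoint (trace (A * B)) := by
  rw [isSelfAdjoint_iff, ← trace_conjTranspose, conjTranspose_mul, hA.eq, hB.eq, trace_mul_comm]

theorem piKronecker_piecewise_smul_one_add_swapMatrix {ι κ R : Type*} [Fintype ι]
    [DecidableEq ι] [DecidableEq κ] [CommSemiring R] (c : R) (S : Finset ι) :
    piKronecker (S.piecewise (fun _ => c • (1 + swapMatrix κ R)) 1) =
      c ^ S.card • ∑ α ∈ S.powerset,
        piKronecker (α.piecewise (fun _ => swapMatrix κ R) 1) := by
  let T : ι → Matrix (κ × κ) (κ × κ) R := S.piecewise ((fun _ => swapMatrix κ R) + 1) 1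
  have hscale : S.piecewise (fun _ => c • (1 + swapMatrix κ R)) 1 =
      S.piecewise (fun i => c • T i) T := by
    ext i : 1
    by_cases hi : i ∈ S <;> simp [hi, T, add_comm]
  rw [hscale, MultilinearMap.map_piecewise_smul, MultilinearMap.map_piecewise_add,
    Finset.prod_const]

section Qubits

variable {n : ℕ}

theorem sum_embedIdx {M : Type*} [AddCommMonoid M] (α : Finset (Fin n))
    (f : (Fin n → Fin 2) → M) :
    ∑ x, f x = ∑ i, ∑ k, f (embedIdx α i k) := by
  rw [← (Equiv.piEquivPiSubtypeProd (· ∈ α) fun _ => Fin 2).symm.sum_comp, Fintype.sum_prod_type]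
  rfl

theorem piecewise_embedIdx (α : Finset (Fin n)) (i j : {x // x ∈ α} → Fin 2)
    (k l : {x // x ∉ α} → Fin 2) :
    α.piecewise (embedIdx α j l) (embedIdx α i k) = embedIdx α j k := by
  ext x : 1
  by_cases hx : x ∈ α <;> simp [embedIdx, hx]

theorem trace_reduced_mul_self (ρ : QMat n) (α : Finset (Fin n)) :
    trace (reduced ρ α * reduced ρ α) =
      trace (tensorSquare ρ * piKronecker (α.piecewise (fun _ => swapMatrix (Fin 2) ℂ) 1)) := by
  rw [trace_tensorSquare_mul_swapMatrix]
  simp only [sum_embedIdx α, piecewise_embedIdx, trace, diag, mul_apply, reduced,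
    Finset.sum_mul_sum]
  exact Finset.sum_congr rfl fun i _ => Finset.sum_comm

theorem localOp_eq_piKronecker (S : Finset (Fin n))
    (V : {i : Fin n // i ∈ S} → Matrix (Fin 2) (Fin 2) ℂ) :
    localOp S V = piKronecker (extendOne S V) := by
  ext x y
  rw [piKronecker_apply]
  refine Finset.prod_congr rfl fun i _ => ?_
  unfold extendOne
  split_ifs <;> simp_all [one_apply]

theorem projZ_eq_piKronecker (S : Finset (Fin n)) (z : {i : Fin n // i ∈ S} → Fin 2) :
    projZ S z = piKronecker (extendOne S fun i => single (z i) (z i) 1) := by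
  ext x y
  rw [piKronecker_apply]
  refine Finset.prod_congr rfl fun i _ => ?_
  unfold extendOne
  split_ifs <;> simp_all [one_apply, eq_comm]

theorem conj_localOp_projZ (S : Finset (Fin n))
    (V : {i : Fin n // i ∈ S} → Matrix (Fin 2) (Fin 2) ℂ) (z : {i : Fin n // i ∈ S} → Fin 2) :
    (localOp S V)ᴴ * projZ S z * localOp S V =
      piKronecker (extendOne S fun i => heisenbergProj (z i) (V i)) := by
  rw [localOp_eq_piKronecker, projZ_eq_piKronecker, conjTranspose_piKronecker, piKronecker_mul,
    piKronecker_mul]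
  simp only [apply_extendOne S conjTranspose conjTranspose_one, extendOne_mul, heisenbergProj]

theorem ofReal_born {ρ : QMat n} (hρ : ρ.IsHermitian) (S : Finset (Fin n))
    (V : {i : Fin n // i ∈ S} → unitaryGroup (Fin 2) ℂ) (z : {i : Fin n // i ∈ S} → Fin 2) :
    (born ρ S V z : ℂ) =
      trace (ρ * piKronecker (extendOne S fun i => heisenbergProj (z i) (V i).1)) := by
  have hproj : (projZ S z).IsHermitian := by
    rw [IsHermitian, projZ_eq_piKronecker, conjTranspose_piKronecker]
    simp only [apply_extendOne S conjTranspose conjTranspose_one, conjTranspose_single, star_one]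
  have hreal := isSelfAdjoint_trace_mul
    (isHermitian_mul_mul_conjTranspose (localOp S fun i => (V i).1) hρ) hproj
  rw [born, Complex.conj_eq_iff_re.mp hreal, ← conj_localOp_projZ, Matrix.mul_assoc,
    Matrix.mul_assoc, trace_mul_comm, Matrix.mul_assoc]

theorem ofReal_born_sq {ρ : QMat n} (hρ : ρ.IsHermitian) (S : Finset (Fin n))
    (V : {i : Fin n // i ∈ S} → unitaryGroup (Fin 2) ℂ) (z : {i : Fin n // i ∈ S} → Fin 2) :
    ((born ρ S V z ^ 2 : ℝ) : ℂ) = trace (tensorSquare ρ * piKronecker (extendOne S fun i =>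
      heisenbergProj (z i) (V i).1 ⊗ₖ heisenbergProj (z i) (V i).1)) := by
  rw [Complex.ofReal_pow, ofReal_born hρ, ← trace_tensorSquare_mul, tensorSquare_piKronecker]
  simp only [apply_extendOne S (fun A => A ⊗ₖ A) one_kronecker_one]

variable (μ : Measure (unitaryGroup (Fin 2) ℂ)) [μ.IsHaarMeasure] [IsProbabilityMeasure μ]

open scoped Matrix.Norms.L2Operator in
theorem integral_born_sq {ρ : QMat n} (hρ : ρ.IsHermitian) (S : Finset (Fin n))
    (z : {i : Fin n // i ∈ S} → Fin 2) :
    ∫ V, born ρ S V z ^ 2 ∂(Measure.pi fun _ : {i : Fin n // i ∈ S} => μ) =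
      (1 / 6) ^ S.card * ∑ α ∈ S.powerset, (trace (reduced ρ α * reduced ρ α)).re := by
  have := isMulRightInvariant_of_isHaarMeasure μ
  have hint (i : {i : Fin n // i ∈ S}) := integrable_heisenbergProj_kronecker μ (z i)
  let L := traceLinearMap _ ℂ ℂ ∘ₗ LinearMap.mulLeft ℂ (tensorSquare ρ)
  have key := calc
    ((∫ V, born ρ S V z ^ 2 ∂(Measure.pi fun _ : {i : Fin n // i ∈ S} => μ) : ℝ) : ℂ) =
        ∫ V : {i : Fin n // i ∈ S} → unitaryGroup (Fin 2) ℂ, L (piKronecker (extendOne S fun i =>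
          heisenbergProj (z i) (V i).1 ⊗ₖ heisenbergProj (z i) (V i).1))
          ∂(Measure.pi fun _ => μ) := by
      rw [← integral_complex_ofReal]
      simp only [ofReal_born_sq hρ]
      rfl
    _ = L (piKronecker (extendOne S fun i => ∫ U : unitaryGroup (Fin 2) ℂ,
          heisenbergProj (z i) U.1 ⊗ₖ heisenbergProj (z i) U.1 ∂μ)) := by
      rw [integral_linearMap_comp L (integrable_piKronecker_extendOne hint),
        integral_piKronecker_extendOne hint]
    _ = L ((1 / 6 : ℂ) ^ S.card • ∑ α ∈ S.powerset,
          piKronecker (α.piecewise (fun _ => swapMatrix (Fin 2) ℂ) 1)) := by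
      simp only [integral_heisenbergProj_kronecker, extendOne_const,
        piKronecker_piecewise_smul_one_add_swapMatrix]
      norm_num
    _ = (1 / 6) ^ S.card * ∑ α ∈ S.powerset, trace (reduced ρ α * reduced ρ α) := by
      rw [map_smul, map_sum, smul_eq_mul]
      simp only [trace_reduced_mul_self]
      rfl
  rw [← Complex.ofReal_re (∫ V, _ ∂_), key, ← Complex.re_sum, ← Complex.re_ofReal_mul]
  norm_num

theorem CE_eq_LRM_all_strings_general {ρ : QMat n} (hρ : ρ.IsHermitian) (S : Finset (Fin n)) :
    CE ρ S = 1 - (3 / 2 : ℝ) ^ S.card * ∑ z : {i : Fin n // i ∈ S} → Fin 2,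
      ∫ V, born ρ S V z ^ 2 ∂(Measure.pi fun _ : {i : Fin n // i ∈ S} => μ) := by
  simp only [integral_born_sq μ hρ, Finset.sum_const, Finset.card_univ, Fintype.card_fun,
    Fintype.card_fin, Fintype.card_coe, nsmul_eq_mul, Nat.cast_pow, Nat.cast_ofNat, CE]
  rw [← mul_assoc, ← mul_assoc, ← mul_pow, ← mul_pow]
  norm_num

end Qubits

/-- **CEs via LRMs (uniform average over bitstrings)**:
`C_ψ(S) = 1 - (3/2)^s ∑_z 𝔼_U[P_U(z)²]`. -/
theorem CE_eq_LRM_all_strings (n : ℕ) (ψ : (Fin n → Fin 2) → ℂ)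
    (hψ : (∑ x, star (ψ x) * ψ x) = 1)
    (S : Finset (Fin n)) (hS : S.Nonempty)
    (μ : Measure (Matrix.unitaryGroup (Fin 2) ℂ)) [μ.IsHaarMeasure] [IsProbabilityMeasure μ] :
    CE (Matrix.vecMulVec ψ (star ψ)) S
      = 1 - (3 / 2 : ℝ) ^ S.card *
        ∑ z : ({i : Fin n // i ∈ S} → Fin 2),
          ∫ V : ({i : Fin n // i ∈ S} → Matrix.unitaryGroup (Fin 2) ℂ),
            (born (Matrix.vecMulVec ψ (star ψ)) S V z) ^ 2
            ∂(Measure.pi fun _ : {i : Fin n // i ∈ S} => μ) := by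
  exact CE_eq_LRM_all_strings_general μ ((by simp [IsHermitian, conjTranspose_vecMulVec])) S
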